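/- Let G = (V, E) be a weakly connected finite DAG. The following three conditions are equivalent: (i) G is a directed moral graph (DMG); (ii) for every nonempty V' ⊆ V such that the induced subgraph G(V') is weakly connected, G(V') is a DMG; (iii) for every nonempty V' ⊆ V such that the induced subgraph G(V') is weakly connected, G(V') has exactly one source node. -/

import Mathlib

/-- The edge relation has no directed cycles: its transitive closure is irreflexive. -/
def IsDAGRel {V : Type} (E : V → V → Prop) : Prop :=
  Irreflexive (Relation.TransGen E)

/-- Weak connectivity: the reflexive–transitive closure of the symmetrization of `E`
relates every pair of vertices. -/
def WeaklyConnectedRel {V : Type} (E : V → V → Prop) : Prop :=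
  ∀ a b : V, Relation.ReflTransGen (fun u v => E u v ∨ E v u) a b

/-- The moral condition: any two distinct parents of a common child are adjacent. -/
def MoralRel {V : Type} (E : V → V → Prop) : Prop :=
  ∀ k i j : V, E i k → E j k → i ≠ j → (E i j ∨ E j i)

/-- A directed moral graph (DMG): a weakly connected DAG satisfying the moral condition. -/
def IsDMG {V : Type} (E : V → V → Prop) : Prop :=
  IsDAGRel E ∧ WeaklyConnectedRel E ∧ MoralRel E

/-- The edge relation of the induced subgraph on `V' ⊆ V`. -/
def inducedRel {V : Type} (E : V → V → Prop) (V' : Set V) : V' → V' → Prop :=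
  fun a b => E a b

/-!
Reversing the edges, the moral condition becomes the local hypothesis of the Church–Rosser theorem:
two parents of the same vertex are equal or one of them is a parent of the other. Hence in a weakly
connected moral graph any two vertices have a common ancestor, and two sources with a common
ancestor coincide; well-foundedness supplies one source. Conversely, if `i` and `j` are distinct
non-adjacent parents of `k`, then they are two sources of the connected subgraph on `{i, j, k}`.
-/

open Relation Function

/-- A source node of the graph with edge relation `R`: a vertex without parents. -/
def IsSource {α : Type*} (R : α → α → Prop) (s : α) : Prop :=
  ∀ t, ¬ R t s

theorem IsSource.eq_of_reflTransGen_swap {α : Type*} {R : α → α → Prop} {s a : α}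
    (hs : IsSource R s) (h : ReflTransGen (swap R) s a) : a = s :=
  (reflTransGen_iff_eq (r := swap R) hs).1 h

theorem IsSource.eq_of_join_reflTransGen_swap {α : Type*} {R : α → α → Prop} {s t : α}
    (hs : IsSource R s) (ht : IsSource R t) (h : Join (ReflTransGen (swap R)) s t) : s = t := by
  obtain ⟨a, hsa, hta⟩ := h
  exact (hs.eq_of_reflTransGen_swap hsa).symm.trans (ht.eq_of_reflTransGen_swap hta)

theorem exists_isSource_of_wellFounded {α : Type*} [Nonempty α] {R : α → α → Prop}
    (hwf : WellFounded R) : ∃ s, IsSource R s := by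
  obtain ⟨s, -, hs⟩ := hwf.has_min Set.univ Set.univ_nonempty
  exact ⟨s, fun t => hs t (Set.mem_univ t)⟩

section

variable {V : Type} {E : V → V → Prop}

theorem isDAGRel_of_wellFounded (hwf : WellFounded E) : IsDAGRel E :=
  hwf.transGen.irrefl.irrefl

theorem IsDAGRel.wellFounded [Finite V] (hdag : IsDAGRel E) : WellFounded E := by
  have : Std.Irrefl (TransGen E) := ⟨hdag⟩
  exact Subrelation.wf TransGen.single (Finite.wellFounded_of_trans_of_irrefl (TransGen E))

theorem IsDAGRel.induced (hdag : IsDAGRel E) (V' : Set V) : IsDAGRel (inducedRel E V') :=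
  fun a ha => hdag a (TransGen.lift Subtype.val (fun _ _ h => h) _ _ ha)

theorem MoralRel.induced (hmoral : MoralRel E) (V' : Set V) : MoralRel (inducedRel E V') :=
  fun k i j hik hjk hij => hmoral k i j hik hjk (Subtype.coe_ne_coe.2 hij)

theorem IsDMG.induced (h : IsDMG E) {V' : Set V}
    (hconn : WeaklyConnectedRel (inducedRel E V')) : IsDMG (inducedRel E V') :=
  ⟨h.1.induced V', hconn, h.2.2.induced V'⟩

theorem MoralRel.equivalence_join_reflTransGen_swap (hmoral : MoralRel E) :
    Equivalence (Join (ReflTransGen (swap E))) := by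
  refine equivalence_join_reflTransGen fun k i j hik hjk => ?_
  rcases eq_or_ne i j with rfl | hij
  · exact ⟨i, .refl, .refl⟩
  rcases hmoral k i j hik hjk hij with hEij | hEji
  · exact ⟨i, .refl, .single hEij⟩
  · exact ⟨j, .single hEji, .refl⟩

theorem MoralRel.join_reflTransGen_swap (hmoral : MoralRel E) (hconn : WeaklyConnectedRel E)
    (a b : V) : Join (ReflTransGen (swap E)) a b := by
  have hequiv := hmoral.equivalence_join_reflTransGen_swap
  induction hconn a b with
  | refl => exact hequiv.refl a
  | @tail u v _ huv ih =>
    refine hequiv.trans ih ?_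
    rcases huv with hEuv | hEvu
    · exact ⟨u, .refl, .single hEuv⟩
    · exact ⟨v, .single hEvu, .refl⟩

theorem MoralRel.existsUnique_isSource [Nonempty V] (hmoral : MoralRel E)
    (hconn : WeaklyConnectedRel E) (hwf : WellFounded E) : ∃! s, IsSource E s := by
  obtain ⟨s, hs⟩ := exists_isSource_of_wellFounded hwf
  exact ⟨s, hs, fun t ht =>
    ht.eq_of_join_reflTransGen_swap hs (hmoral.join_reflTransGen_swap hconn t s)⟩

theorem weaklyConnectedRel_of_forall_eq_or_rel {k : V} (hk : ∀ a, a = k ∨ E a k) :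
    WeaklyConnectedRel E := by
  intro a b
  have to_hub : ReflTransGen (fun u v => E u v ∨ E v u) a k := by
    rcases hk a with rfl | hak
    · exact .refl
    · exact .single (.inl hak)
  have from_hub : ReflTransGen (fun u v => E u v ∨ E v u) k b := by
    rcases hk b with rfl | hbk
    · exact .refl
    · exact .single (.inr hbk)
  exact to_hub.trans from_hub

theorem weaklyConnectedRel_inducedRel_triple {i j k : V} (hik : E i k) (hjk : E j k) :
    WeaklyConnectedRel (inducedRel E {i, j, k}) := by
  refine weaklyConnectedRel_of_forall_eq_or_rel (k := ⟨k, by simp⟩) ?_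
  rintro ⟨a, rfl | rfl | rfl⟩
  · exact .inr hik
  · exact .inr hjk
  · exact .inl rfl

theorem moralRel_of_subsingleton_isSource (hasymm : ∀ a b, E a b → ¬ E b a)
    (h : ∀ V' : Set V, V'.Nonempty → WeaklyConnectedRel (inducedRel E V') →
      {s | IsSource (inducedRel E V') s}.Subsingleton) : MoralRel E := by
  intro k i j hik hjk hij
  by_contra! hnonadj
  have hirrefl : ∀ a, ¬ E a a := fun a haa => hasymm a a haa haa
  have hi : IsSource (inducedRel E {i, j, k}) ⟨i, by simp⟩ := by
    rintro ⟨a, rfl | rfl | rfl⟩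
    · exact hirrefl _
    · exact hnonadj.2
    · exact hasymm _ _ hik
  have hj : IsSource (inducedRel E {i, j, k}) ⟨j, by simp⟩ := by
    rintro ⟨a, rfl | rfl | rfl⟩
    · exact hnonadj.1
    · exact hirrefl _
    · exact hasymm _ _ hjk
  have hsources := h {i, j, k} ⟨i, by simp⟩ (weaklyConnectedRel_inducedRel_triple hik hjk)
  exact hij (congrArg Subtype.val (hsources hi hj))

theorem stmt16_general (hwf : WellFounded E) (hconn : WeaklyConnectedRel E) :
    List.TFAE [
      IsDMG E,
      ∀ V' : Set V, V'.Nonempty → WeaklyConnectedRel (inducedRel E V') → IsDMG (inducedRel E V'),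
      ∀ V' : Set V, V'.Nonempty → WeaklyConnectedRel (inducedRel E V') →
        ∃! s : V', IsSource (inducedRel E V') s] := by
  tfae_have 1 → 2 := fun h _ _ hconn' => h.induced hconn'
  tfae_have 2 → 3 := by
    intro h V' hne hconn'
    have : Nonempty V' := hne.to_subtype
    exact (h V' hne hconn').2.2.existsUnique_isSource hconn' (InvImage.wf Subtype.val hwf)
  tfae_have 3 → 1 := by
    refine fun h => ⟨isDAGRel_of_wellFounded hwf, hconn, ?_⟩
    exact moralRel_of_subsingleton_isSource hwf.asymmetric
      fun V' hne hconn' _ hs _ ht => (h V' hne hconn').unique hs ht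
  tfae_finish

end

theorem stmt16 (V : Type) [Fintype V] [Nonempty V] (E : V → V → Prop)
    (hdag : IsDAGRel E) (hconn : WeaklyConnectedRel E) :
    (IsDMG E ↔
      ∀ V' : Set V, V'.Nonempty → WeaklyConnectedRel (inducedRel E V') →
        IsDMG (inducedRel E V')) ∧
    ((∀ V' : Set V, V'.Nonempty → WeaklyConnectedRel (inducedRel E V') →
        IsDMG (inducedRel E V')) ↔
      ∀ V' : Set V, V'.Nonempty → WeaklyConnectedRel (inducedRel E V') →
        ∃! s : V', ∀ t : V', ¬ inducedRel E V' t s) := by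
  have h := stmt16_general hdag.wellFounded hconn
  exact ⟨h.out 0 1, h.out 1 2⟩
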